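/- arXiv:math/0207266 — 6 statements merged into one kernel-verified Lean document; each statement's English description precedes it below -/
import Mathlib

section
/- For every m ≥ 1 there exists a holomorphic map φ : ℂ → ℂ^m with the following property: every entire function h : ℂ^m → ℂ that vanishes identically on the image φ(ℂ) is identically zero on ℂ^m. In particular, φ(ℂ) is not contained in any proper closed analytic subset of ℂ^m. -/
open Filter Topology in
/-- One interpolation step. -/
theorem interp_step {E : Type*} [NormedAddCommGroup E] [NormedSpace ℂ E] (a : ℕ → E) (n : ℕ)
    (F : ℂ → E) (hF : Differentiable ℂ F) :
    ∃ G : ℂ → E, Differentiable ℂ G ∧ (∀ i : ℕ, i ≤ n → G i = F i) ∧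
      G ((n + 1 : ℕ) : ℂ) = a (n + 1) ∧
      ∀ z : ℂ, ‖z‖ ≤ ((n : ℝ) + 1) / 2 → dist (F z) (G z) ≤ (1 / 2 : ℝ) ^ n := by
  set p : ℂ := ((n + 1 : ℕ) : ℂ) with hp
  have hp0 : p ≠ 0 := by rw [hp]; exact_mod_cast Nat.succ_ne_zero n
  have hpn : ‖p‖ = (n : ℝ) + 1 := by rw [hp, Complex.norm_natCast]; push_cast; ring
  let P : ℂ → ℂ := fun z => ∏ j ∈ Finset.range (n + 1), (z - (j : ℂ))
  have hPd : Differentiable ℂ P := by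
    intro z
    exact DifferentiableAt.fun_finset_prod (fun j _ => by fun_prop)
  have hPp : P p ≠ 0 := by
    refine Finset.prod_ne_zero_iff.mpr fun j hj => ?_
    rw [sub_ne_zero, hp]
    have := Finset.mem_range.mp hj
    exact_mod_cast (by omega : n + 1 ≠ j)
  have hPi : ∀ i : ℕ, i ≤ n → P i = 0 := fun i hi =>
    Finset.prod_eq_zero (Finset.mem_range.mpr (by omega : i < n + 1)) (sub_self _)
  let Q : ℂ → E := fun z => (P z / P p) • (a (n + 1) - F p)
  have hQd : Differentiable ℂ Q := (hPd.div_const _).smul_const _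
  obtain ⟨M, hM⟩ := (isCompact_closedBall (0 : ℂ) (((n : ℝ) + 1) / 2)).exists_bound_of_continuousOn
    hQd.continuous.continuousOn
  have hM1 : 0 < |M| + 1 := by positivity
  obtain ⟨k, hk⟩ := exists_pow_lt_of_lt_one (y := (1 / 2 : ℝ))
    (show 0 < (1 / 2 : ℝ) ^ n / (|M| + 1) by positivity) (by norm_num)
  refine ⟨fun z => F z + (z / p) ^ k • Q z, ?_, ?_, ?_, ?_⟩
  · exact hF.add (((differentiable_id.div_const p).pow k).smul hQd)
  · intro i hi
    simp [Q, hPi i hi]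
  · simp [Q, hPp, hp0]
  · intro z hz
    rw [dist_self_add_right, norm_smul, norm_pow, norm_div, hpn]
    have h1 : ‖z‖ / ((n : ℝ) + 1) ≤ 1 / 2 := by
      rw [div_le_iff₀ (by positivity)]; linarith
    have h2 : ‖Q z‖ ≤ |M| + 1 := by
      have := hM z (by simpa using hz)
      linarith [le_abs_self M]
    calc (‖z‖ / ((n : ℝ) + 1)) ^ k * ‖Q z‖ ≤ (1 / 2) ^ k * (|M| + 1) := by gcongr
      _ ≤ (1 / 2 : ℝ) ^ n := by
        rw [lt_div_iff₀ hM1] at hk; exact hk.le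

open Filter Topology in
/-- Entire interpolation at the positive integers. -/
theorem exists_entire_interp {E : Type*} [NormedAddCommGroup E] [NormedSpace ℂ E]
    [CompleteSpace E] (a : ℕ → E) :
    ∃ f : ℂ → E, Differentiable ℂ f ∧ ∀ n : ℕ, f ((n + 1 : ℕ) : ℂ) = a (n + 1) := by
  let S := {F : ℂ → E // Differentiable ℂ F}
  have step : ∀ (n : ℕ) (F : S), ∃ G : S, (∀ i : ℕ, i ≤ n → G.1 i = F.1 i) ∧
      G.1 ((n + 1 : ℕ) : ℂ) = a (n + 1) ∧
      ∀ z : ℂ, ‖z‖ ≤ ((n : ℝ) + 1) / 2 → dist (F.1 z) (G.1 z) ≤ (1 / 2 : ℝ) ^ n := by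
    intro n F
    obtain ⟨G, h1, h2⟩ := interp_step a n F.1 F.2
    exact ⟨⟨G, h1⟩, h2⟩
  choose T hT1 hT2 hT3 using step
  let F : ℕ → S := fun n => Nat.rec ⟨fun _ => 0, differentiable_const _⟩ T n
  have hF : ∀ n, F (n + 1) = T n (F n) := fun n => rfl
  have hval : ∀ n k : ℕ, (F (n + 1 + k)).1 ((n + 1 : ℕ) : ℂ) = a (n + 1) := by
    intro n k
    induction k with
    | zero => rw [Nat.add_zero, hF]; exact hT2 n (F n)
    | succ k ih => rw [← Nat.add_assoc, hF, hT1 _ _ _ (by omega), ih]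
  -- distance on balls
  have hd : ∀ (N : ℕ) (z : ℂ), ‖z‖ ≤ ((N : ℝ) + 1) / 2 → ∀ k : ℕ,
      dist ((F (N + k)).1 z) ((F (N + (k + 1))).1 z) ≤ 1 * (1 / 2 : ℝ) ^ k := by
    intro N z hz k
    rw [← Nat.add_assoc, hF]
    refine (hT3 (N + k) (F (N + k)) z ?_).trans ?_
    · push_cast
      have : (0 : ℝ) ≤ k := by positivity
      linarith
    · rw [one_mul]
      exact pow_le_pow_of_le_one (by norm_num) (by norm_num) (by omega)
  have hlim : ∀ z : ℂ, ∃ l, Tendsto (fun n => (F n).1 z) atTop (𝓝 l) := by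
    intro z
    obtain ⟨N, hN⟩ := exists_nat_ge (2 * ‖z‖)
    have hc := cauchySeq_of_le_geometric (1 / 2 : ℝ) 1 (by norm_num)
      (hd N z (by linarith))
    obtain ⟨l, hl⟩ := cauchySeq_tendsto_of_complete hc
    refine ⟨l, (tendsto_add_atTop_iff_nat N).mp ?_⟩
    simpa [Nat.add_comm] using hl
  choose f hf using hlim
  refine ⟨f, ?_, ?_⟩
  · intro z
    obtain ⟨N, hN⟩ := exists_nat_ge (2 * (‖z‖ + 1))
    have hu : TendstoUniformlyOn (fun k w => (F (N + k)).1 w) f atTop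
        (Metric.ball (0 : ℂ) (‖z‖ + 1)) := by
      rw [Metric.tendstoUniformlyOn_iff]
      intro ε hε
      have ht : Tendsto (fun k : ℕ => 1 * (1 / 2 : ℝ) ^ k / (1 - 1 / 2)) atTop (𝓝 0) := by
        have := (tendsto_pow_atTop_nhds_zero_of_lt_one (r := (1 / 2 : ℝ)) (by norm_num)
          (by norm_num)).const_mul 1 |>.div_const (1 - 1 / 2)
        simpa using this
      filter_upwards [ht.eventually (gt_mem_nhds hε)] with k hk w hw
      rw [dist_comm]
      refine lt_of_le_of_lt ?_ hk
      have hw' : ‖w‖ < ‖z‖ + 1 := by simpa using hw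
      refine dist_le_of_le_geometric_of_tendsto (1 / 2 : ℝ) 1 (by norm_num)
        (hd N w (by linarith)) ?_ k
      have := (tendsto_add_atTop_iff_nat N).mpr (hf w)
      simpa [Nat.add_comm] using this
    have hD := hu.tendstoLocallyUniformlyOn.differentiableOn
      (Eventually.of_forall fun k => (F (N + k)).2.differentiableOn) Metric.isOpen_ball
    exact hD.differentiableAt (Metric.isOpen_ball.mem_nhds (by simp))
  · intro n
    have h1 := (tendsto_add_atTop_iff_nat (n + 1)).mpr (hf ((n + 1 : ℕ) : ℂ))
    refine tendsto_nhds_unique h1 ?_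
    refine tendsto_const_nhds.congr fun k => ?_
    rw [Nat.add_comm k, hval]

/-- For every `m ≥ 1` there exists a holomorphic map `φ : ℂ → ℂ^m` such that
every entire function `h : ℂ^m → ℂ` vanishing identically on `φ(ℂ)` is identically zero. -/
theorem exists_analytically_nondegenerate_curve (m : ℕ) (hm : 1 ≤ m) :
    ∃ φ : ℂ → (Fin m → ℂ), Differentiable ℂ φ ∧
      ∀ h : (Fin m → ℂ) → ℂ, Differentiable ℂ h →
        (∀ z : ℂ, h (φ z) = 0) → ∀ w : Fin m → ℂ, h w = 0 := by
  obtain ⟨f, hf, hv⟩ := exists_entire_interp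
    (fun n => TopologicalSpace.denseSeq (Fin m → ℂ) (n - 1))
  refine ⟨f, hf, fun h hh hz w => ?_⟩
  have := Continuous.ext_on (TopologicalSpace.denseRange_denseSeq (Fin m → ℂ))
    hh.continuous (continuous_const (y := (0 : ℂ))) (by
      rintro _ ⟨n, rfl⟩
      have h1 := hz ((n + 1 : ℕ) : ℂ)
      rw [hv] at h1
      simpa using h1)
  exact congrFun this w
end

section
/- Let m ≥ 1 and let α₁, …, α_m be positive real numbers that are linearly independent over ℚ. Define φ : ℂ → ℂ^m by φ(z) = (exp(i·α₁·z), …, exp(i·α_m·z)). Then every entire function h : ℂ^m → ℂ that vanishes identically on the image φ(ℂ) is identically zero on ℂ^m. -/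
open MeasureTheory Filter Topology UnitAddTorus

noncomputable section

local instance instMeasureSpaceCircleAux : MeasureSpace UnitAddCircle :=
  ⟨AddCircle.haarAddCircle⟩

local instance instHaarCircleAux : Measure.IsAddHaarMeasure (volume : Measure UnitAddCircle) :=
  inferInstanceAs (Measure.IsAddHaarMeasure AddCircle.haarAddCircle)

local instance instProbCircleAux : IsProbabilityMeasure (volume : Measure UnitAddCircle) :=
  inferInstanceAs (IsProbabilityMeasure AddCircle.haarAddCircle)

/-- An entire function vanishing on the unit torus vanishes. -/
theorem zero_of_zero_on_torus {m : ℕ} (h : (Fin m → ℂ) → ℂ) (hh : Differentiable ℂ h)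
    (hz : ∀ w : Fin m → ℂ, (∀ j, ‖w j‖ = 1) → h w = 0) : ∀ w, h w = 0 := by
  have key : ∀ s : Finset (Fin m), ∀ w : Fin m → ℂ, (∀ j, j ∉ s → ‖w j‖ = 1) → h w = 0 := by
    intro s
    induction s using Finset.induction_on with
    | empty => intro w hw; exact hz w (fun j => hw j (by simp))
    | insert i s his ih =>
      intro w hw
      have hd : Differentiable ℂ (fun z : ℂ => h (Function.update w i z)) := by
        refine hh.comp ?_
        intro z
        exact (hasFDerivAt_update w z).differentiableAt
      have hzero : ∀ z : ℂ, ‖z‖ = 1 → h (Function.update w i z) = 0 := by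
        intro z hz1
        refine ih _ (fun j hj => ?_)
        by_cases hji : j = i
        · subst hji; simpa using hz1
        · rw [Function.update_of_ne hji]
          exact hw j (by simp [hji, hj])
      have han : AnalyticOnNhd ℂ (fun z : ℂ => h (Function.update w i z)) Set.univ :=
        fun z _ => hd.analyticAt z
      have hfreq : ∃ᶠ z in 𝓝[≠] (1 : ℂ), h (Function.update w i z) = 0 := by
        have ht : Tendsto (fun t : ℝ => Complex.exp (t * Complex.I)) (𝓝[>] 0) (𝓝[≠] (1 : ℂ)) := by
          refine tendsto_nhdsWithin_iff.2 ⟨?_, ?_⟩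
          · have : Continuous (fun t : ℝ => Complex.exp (t * Complex.I)) := by fun_prop
            have h2 := this.tendsto 0
            simp only [Complex.ofReal_zero, zero_mul, Complex.exp_zero] at h2
            exact h2.mono_left nhdsWithin_le_nhds
          · have : Set.Ioo (0 : ℝ) 1 ∈ 𝓝[>] (0 : ℝ) := Ioo_mem_nhdsGT one_pos
            filter_upwards [this] with t ht
            simp only [Set.mem_compl_iff, Set.mem_singleton_iff]
            intro he
            have h3 := congrArg Complex.im he
            rw [Complex.exp_ofReal_mul_I_im] at h3
            have := Real.sin_pos_of_pos_of_lt_pi ht.1 (by linarith [ht.2, Real.pi_gt_three])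
            simp at h3
            linarith
        refine ht.frequently (Eventually.frequently (Eventually.of_forall fun t => ?_))
        exact hzero _ (Complex.norm_exp_ofReal_mul_I t)
      have := han.eqOn_zero_of_preconnected_of_frequently_eq_zero isPreconnected_univ
        (Set.mem_univ _) hfreq (Set.mem_univ (w i))
      simpa using this
  intro w
  exact key Finset.univ w (fun j hj => absurd (Finset.mem_univ j) hj)

/-- The real curve in the torus. -/
def torusCurve {m : ℕ} (α : Fin m → ℝ) (t : ℝ) : UnitAddTorus (Fin m) :=
  fun j => ((α j * t / (2 * Real.pi) : ℝ) : UnitAddCircle)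

theorem continuous_torusCurve {m : ℕ} (α : Fin m → ℝ) : Continuous (torusCurve α) := by
  refine continuous_pi fun j => ?_
  exact (AddCircle.continuous_mk' 1).comp (by fun_prop)

theorem mFourier_torusCurve {m : ℕ} (α : Fin m → ℝ) (n : Fin m → ℤ) (t : ℝ) :
    mFourier n (torusCurve α t)
      = Complex.exp ((((∑ j, n j * α j : ℝ) : ℂ) * Complex.I) * t) := by
  simp only [mFourier, ContinuousMap.coe_mk, torusCurve, fourier_coe_apply]
  rw [← Complex.exp_sum]
  congr 1
  push_cast
  rw [Finset.sum_mul, Finset.sum_mul]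
  refine Finset.sum_congr rfl fun j _ => ?_
  have : (Real.pi : ℂ) ≠ 0 := by exact_mod_cast Real.pi_ne_zero
  field_simp

theorem integral_mFourier_aux {m : ℕ} (n : Fin m → ℤ) (hn : n ≠ 0) :
    ∫ x, mFourier n x = 0 := by
  have h := (orthonormal_iff_ite.mp (orthonormal_mFourier (d := Fin m))) 0 n
  rw [if_neg (Ne.symm hn)] at h
  simp only [ContinuousMap.inner_toLp, ← mFourier_neg, ← mFourier_add] at h
  simpa using! h

theorem mean_mFourier {m : ℕ} (α : Fin m → ℝ) (hind : LinearIndependent ℚ α) (n : Fin m → ℤ) :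
    Tendsto (fun T : ℝ => T⁻¹ • ∫ t in (0 : ℝ)..T, mFourier n (torusCurve α t)) atTop
      (𝓝 (∫ x, mFourier n x)) := by
  by_cases hn : n = 0
  · subst hn
    simp only [mFourier_zero, ContinuousMap.one_apply]
    have : (∫ x : UnitAddTorus (Fin m), (1 : ℂ)) = 1 := by simp
    rw [this]
    refine tendsto_const_nhds.congr' ?_
    filter_upwards [eventually_gt_atTop 0] with T hT
    simp [hT.ne']
  · rw [integral_mFourier_aux n hn]
    have hl : (∑ j, n j * α j : ℝ) ≠ 0 := by
      intro h0
      apply hn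
      have := Fintype.linearIndependent_iff.1 hind (fun j => (n j : ℚ)) (by
        simpa [Rat.smul_def] using h0)
      funext j
      exact_mod_cast this j
    simp only [mFourier_torusCurve]
    set l : ℝ := ∑ j, n j * α j
    have hc : (l : ℂ) * Complex.I ≠ 0 := by simp [hl]
    simp only [integral_exp_mul_complex hc]
    refine squeeze_zero_norm' (a := fun T : ℝ => T⁻¹ * (2 / ‖(l : ℂ) * Complex.I‖)) ?_ ?_
    · filter_upwards [eventually_gt_atTop 0] with T hT
      rw [norm_smul, norm_div, norm_inv, Real.norm_of_nonneg hT.le]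
      gcongr
      refine (norm_sub_le _ _).trans ?_
      have h1 : ∀ s : ℝ, ‖Complex.exp ((l : ℂ) * Complex.I * s)‖ = 1 := by
        intro s
        rw [show (l : ℂ) * Complex.I * s = ((l * s : ℝ) : ℂ) * Complex.I by push_cast; ring]
        exact Complex.norm_exp_ofReal_mul_I _
      rw [h1, h1]; norm_num
    · simpa using tendsto_inv_atTop_zero.mul_const (2 / ‖(l : ℂ) * Complex.I‖)

theorem mean_span {m : ℕ} (α : Fin m → ℝ) (hind : LinearIndependent ℚ α)
    (g : C(UnitAddTorus (Fin m), ℂ)) (hg : g ∈ Submodule.span ℂ (Set.range mFourier)) :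
    Tendsto (fun T : ℝ => T⁻¹ • ∫ t in (0 : ℝ)..T, g (torusCurve α t)) atTop
      (𝓝 (∫ x, g x)) := by
  have hint : ∀ f : C(UnitAddTorus (Fin m), ℂ), Integrable f volume := fun f =>
    f.continuous.integrable_of_hasCompactSupport (HasCompactSupport.of_compactSpace _)
  have hii : ∀ (f : C(UnitAddTorus (Fin m), ℂ)) (T : ℝ),
      IntervalIntegrable (fun t => f (torusCurve α t)) volume 0 T := fun f T =>
    (f.continuous.comp (continuous_torusCurve α)).intervalIntegrable _ _
  induction hg using Submodule.span_induction with
  | mem x hx => obtain ⟨n, rfl⟩ := hx; exact mean_mFourier α hind n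
  | zero => simp
  | add x y _ _ hx hy =>
    simp only [ContinuousMap.add_apply]
    rw [integral_add (hint x) (hint y)]
    refine (hx.add hy).congr fun T => ?_
    rw [intervalIntegral.integral_add (hii x T) (hii y T), smul_add]
  | smul a x _ hx =>
    simp only [ContinuousMap.smul_apply]
    rw [integral_smul]
    refine (hx.const_smul a).congr fun T => ?_
    rw [intervalIntegral.integral_smul, smul_comm]

theorem integral_zero_of_zero_on_curve {m : ℕ} (α : Fin m → ℝ) (hind : LinearIndependent ℚ α)
    (G : C(UnitAddTorus (Fin m), ℂ)) (hG : ∀ t, G (torusCurve α t) = 0) :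
    ∫ x, G x = 0 := by
  have hint : ∀ f : C(UnitAddTorus (Fin m), ℂ), Integrable f volume := fun f =>
    f.continuous.integrable_of_hasCompactSupport (HasCompactSupport.of_compactSpace _)
  rw [← norm_le_zero_iff]
  refine le_of_forall_pos_le_add fun ε hε => ?_
  have hmem : G ∈ closure (Submodule.span ℂ (Set.range (mFourier (d := Fin m))) :
      Set C(UnitAddTorus (Fin m), ℂ)) := by
    rw [← Submodule.topologicalClosure_coe, span_mFourier_closure_eq_top]; trivial
  obtain ⟨g, hg, hd⟩ := Metric.mem_closure_iff.1 hmem (ε / 2) (by positivity)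
  have hpt : ∀ x, ‖G x - g x‖ ≤ ε / 2 := fun x => by
    rw [← dist_eq_norm]; exact (ContinuousMap.dist_apply_le_dist x).trans hd.le
  have h1 : ‖∫ x, g x‖ ≤ ε / 2 := by
    refine le_of_tendsto (mean_span α hind g hg).norm ?_
    filter_upwards [eventually_gt_atTop 0] with T hT
    have := intervalIntegral.norm_integral_le_of_norm_le_const (a := 0) (b := T) (C := ε / 2)
      (f := fun t => g (torusCurve α t)) (fun t _ => by
        have := hpt (torusCurve α t)
        rwa [hG, zero_sub, norm_neg] at this)
    rw [sub_zero, abs_of_pos hT] at this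
    rw [norm_smul, norm_inv, Real.norm_of_nonneg hT.le, inv_mul_le_iff₀ hT]
    linarith
  have h2 : ‖∫ x, (G x - g x)‖ ≤ ε / 2 := by
    simpa using norm_integral_le_of_norm_le_const (μ := volume) (Eventually.of_forall hpt)
  rw [integral_sub (hint G) (hint g)] at h2
  have h3 := norm_add_le ((∫ x, G x) - ∫ x, g x) (∫ x, g x)
  rw [sub_add_cancel] at h3
  linarith

theorem zero_of_zero_on_curve {m : ℕ} (α : Fin m → ℝ) (hind : LinearIndependent ℚ α)
    (F : C(UnitAddTorus (Fin m), ℂ)) (hF : ∀ t, F (torusCurve α t) = 0)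
    (x : UnitAddTorus (Fin m)) : F x = 0 := by
  have hc : mFourierCoeff F = 0 := by
    funext n
    exact integral_zero_of_zero_on_curve α hind (mFourier (-n) * F) (fun t => by simp [hF])
  have := hasSum_mFourier_series_apply_of_summable (f := F) (by rw [hc]; exact summable_zero) x
  rw [hc] at this
  simpa using this.unique (by simp)

end

/-- For `m ≥ 1` and positive reals `α₁,…,α_m` linearly independent over `ℚ`,
every entire function `h : ℂ^m → ℂ` vanishing identically on the image of
`φ(z) = (exp(i·α₁·z), …, exp(i·α_m·z))` is identically zero. -/
theorem exp_curve_analytically_nondegenerate (m : ℕ) (hm : 1 ≤ m) (α : Fin m → ℝ)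
    (hpos : ∀ j, 0 < α j) (hind : LinearIndependent ℚ α)
    (h : (Fin m → ℂ) → ℂ) (hh : Differentiable ℂ h)
    (hvan : ∀ z : ℂ, h (fun j : Fin m => Complex.exp (Complex.I * (α j) * z)) = 0) :
    ∀ w : Fin m → ℂ, h w = 0 := by
  refine zero_of_zero_on_torus h hh fun w hw => ?_
  let F : C(UnitAddTorus (Fin m), ℂ) :=
    ⟨fun x => h (fun j => fourier 1 (x j)), hh.continuous.comp (by fun_prop)⟩
  have hF : ∀ t, F (torusCurve α t) = 0 := by
    intro t
    rw [← hvan t]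
    change h _ = h _
    congr 1
    funext j
    simp only [torusCurve, fourier_coe_apply]
    congr 1
    have : (Real.pi : ℂ) ≠ 0 := by exact_mod_cast Real.pi_ne_zero
    push_cast
    field_simp
  have hx := zero_of_zero_on_curve α hind F hF
    (fun j => (((w j).arg / (2 * Real.pi) : ℝ) : UnitAddCircle))
  rw [← hx]
  change h _ = h _
  congr 1
  funext j
  simp only [fourier_coe_apply]
  have := Complex.norm_mul_exp_arg_mul_I (w j)
  rw [hw j] at this
  rw [Complex.ofReal_one, one_mul] at this
  refine this.symm.trans ?_
  congr 1
  have : (Real.pi : ℂ) ≠ 0 := by exact_mod_cast Real.pi_ne_zero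
  push_cast
  field_simp
end

section
/- Let m ≥ 1 and let p ∈ ℂ^m. Then there exists a holomorphic map f from the open unit disk Δ = {z ∈ ℂ : |z| < 1} to ℂ^m such that f(0) = p and every entire function h : ℂ^m → ℂ that vanishes identically on f(Δ) is identically zero on ℂ^m. In particular, f(Δ) is Zariski dense in ℂ^m: every polynomial in m variables vanishing on f(Δ) is the zero polynomial. -/
open MeasureTheory Filter Topology

noncomputable section

/-- normalised Haar measure on the torus -/
def torusMeas (m : ℕ) : Measure (UnitAddTorus (Fin m)) :=
  Measure.pi (fun _ => (AddCircle.haarAddCircle : Measure (AddCircle (1:ℝ))))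

instance (m : ℕ) : IsProbabilityMeasure (torusMeas m) := by
  unfold torusMeas; infer_instance

instance (m : ℕ) : Measure.IsOpenPosMeasure (torusMeas m) := by
  unfold torusMeas; infer_instance

lemma integral_fourier_one (n : ℤ) (hn : n ≠ 0) :
    ∫ x, fourier n x ∂(AddCircle.haarAddCircle : Measure (AddCircle (1:ℝ))) = 0 :=
  integral_eq_zero_of_add_right_eq_neg (fourier_add_half_inv_index hn one_pos)

lemma integral_mFourier_torus {m : ℕ} (n : Fin m → ℤ) (hn : n ≠ 0) :
    ∫ x, UnitAddTorus.mFourier n x ∂(torusMeas m) = 0 := by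
  obtain ⟨i, hi⟩ := Function.ne_iff.mp hn
  unfold torusMeas
  change ∫ x : (Fin m → AddCircle (1:ℝ)), ∏ i, fourier (n i) (x i) ∂_ = 0
  rw [integral_fintype_prod_eq_prod (𝕜 := ℂ) (fun i (x : AddCircle (1:ℝ)) => fourier (n i) x)]
  exact Finset.prod_eq_zero (Finset.mem_univ i) (integral_fourier_one _ hi)

/-- the linear flow on the torus -/
def flow {m : ℕ} (l : Fin m → ℝ) (t : ℝ) : UnitAddTorus (Fin m) :=
  fun j => ((l j * t : ℝ) : AddCircle (1:ℝ))

lemma continuous_flow {m : ℕ} (l : Fin m → ℝ) : Continuous (flow l) := by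
  unfold flow
  refine continuous_pi fun j => ?_
  exact (AddCircle.continuous_mk' (1:ℝ)).comp (by fun_prop)

lemma mFourier_flow {m : ℕ} (l : Fin m → ℝ) (n : Fin m → ℤ) (t : ℝ) :
    UnitAddTorus.mFourier n (flow l t) =
      Complex.exp ((2 * Real.pi * Complex.I * ((∑ j, (n j : ℝ) * l j : ℝ) : ℂ)) * t) := by
  change ∏ i, fourier (n i) (((l i * t : ℝ) : AddCircle (1:ℝ))) = _
  simp only [fourier_coe_apply]
  rw [← Complex.exp_sum]
  congr 1
  push_cast
  rw [Finset.mul_sum, Finset.sum_mul]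
  refine Finset.sum_congr rfl fun i _ => ?_
  ring

lemma mean_span_s5 {m : ℕ} (l : Fin m → ℝ) (hl : LinearIndependent ℤ l)
    (P : C(UnitAddTorus (Fin m), ℂ))
    (hP : P ∈ Submodule.span ℂ (Set.range (UnitAddTorus.mFourier (d := Fin m)))) :
    Tendsto (fun T : ℝ => (T:ℂ)⁻¹ * ∫ t in (0:ℝ)..T, P (flow l t)) atTop
      (𝓝 (∫ x, P x ∂(torusMeas m))) := by
  have hint : ∀ (Q : C(UnitAddTorus (Fin m), ℂ)) (T : ℝ),
      IntervalIntegrable (fun t => Q (flow l t)) volume 0 T := fun Q T =>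
    (Q.continuous.comp (continuous_flow l)).intervalIntegrable _ _
  have hint2 : ∀ (Q : C(UnitAddTorus (Fin m), ℂ)), Integrable (fun x => Q x) (torusMeas m) :=
    fun Q => Q.continuous.integrable_of_hasCompactSupport (HasCompactSupport.of_compactSpace _)
  induction hP using Submodule.span_induction with
  | mem x h =>
    obtain ⟨n, rfl⟩ := h
    by_cases hn : n = 0
    · subst hn
      rw [UnitAddTorus.mFourier_zero]
      simp only [ContinuousMap.one_apply, integral_const, probReal_univ, one_smul,
        intervalIntegral.integral_const, sub_zero]
      refine tendsto_const_nhds.congr' ?_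
      filter_upwards [eventually_gt_atTop 0] with T hT
      have : (T:ℂ) ≠ 0 := by exact_mod_cast hT.ne'
      simp [this]
    · rw [integral_mFourier_torus n hn]
      simp only [mFourier_flow]
      set s : ℝ := ∑ j, (n j : ℝ) * l j with hs
      have hs0 : s ≠ 0 := by
        intro h0
        apply hn
        funext j
        refine Fintype.linearIndependent_iff.mp hl n ?_ j
        rw [← h0, hs]
        simp
      set c : ℂ := 2 * Real.pi * Complex.I * (s:ℂ) with hc
      have hc0 : c ≠ 0 := by
        have : (s:ℂ) ≠ 0 := by exact_mod_cast hs0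
        simp [hc, this, Real.pi_ne_zero]
      rw [tendsto_zero_iff_norm_tendsto_zero]
      have hlim : Tendsto (fun T : ℝ => T⁻¹ * (2 / ‖c‖)) atTop (𝓝 0) := by
        simpa using tendsto_inv_atTop_zero.mul_const (2 / ‖c‖)
      refine squeeze_zero' (Eventually.of_forall fun _ => norm_nonneg _) ?_ hlim
      filter_upwards [eventually_gt_atTop 0] with T hT
      rw [integral_exp_mul_complex hc0, norm_mul, norm_inv, Complex.norm_real, norm_div,
        Real.norm_of_nonneg hT.le]
      gcongr
      refine (norm_sub_le _ _).trans ?_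
      have e : ∀ t : ℝ, ‖Complex.exp (c * t)‖ = 1 := by
        intro t
        have : c * t = ((2 * Real.pi * s * t : ℝ) : ℂ) * Complex.I := by
          rw [hc]; push_cast; ring
        rw [this, Complex.norm_exp_ofReal_mul_I]
      rw [e, e]; norm_num
  | zero => simp
  | add x y _ _ hx hy =>
    simp only [ContinuousMap.add_apply]
    rw [integral_add (hint2 x) (hint2 y)]
    refine (hx.add hy).congr fun T => ?_
    rw [intervalIntegral.integral_add (hint x T) (hint y T), mul_add]
  | smul a x _ hx =>
    simp only [ContinuousMap.smul_apply, smul_eq_mul]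
    rw [integral_const_mul]
    refine (hx.const_mul a).congr fun T => ?_
    rw [intervalIntegral.integral_const_mul]; ring

lemma torus_zero {m : ℕ} (l : Fin m → ℝ) (hl : LinearIndependent ℤ l)
    (g : C(UnitAddTorus (Fin m), ℂ)) (hg : ∀ t, g (flow l t) = 0) : ∀ x, g x = 0 := by
  have hint2 : ∀ (Q : C(UnitAddTorus (Fin m), ℂ)), Integrable (fun x => Q x) (torusMeas m) :=
    fun Q => Q.continuous.integrable_of_hasCompactSupport (HasCompactSupport.of_compactSpace _)
  let F : C(UnitAddTorus (Fin m), ℂ) := ⟨fun x => ((‖g x‖ : ℝ) : ℂ), by fun_prop⟩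
  have hF : ∀ t, F (flow l t) = 0 := fun t => by simp [F, hg]
  have key : ‖∫ x, F x ∂(torusMeas m)‖ ≤ 0 := by
    refine le_of_forall_pos_le_add fun ε hε => ?_
    have hmem : F ∈ (Submodule.span ℂ
        (Set.range (UnitAddTorus.mFourier (d := Fin m)))).topologicalClosure := by
      rw [UnitAddTorus.span_mFourier_closure_eq_top]; trivial
    obtain ⟨P, hP, hd⟩ := Metric.mem_closure_iff.mp hmem (ε/2) (by positivity)
    have hPF : ∀ x, ‖F x - P x‖ ≤ ε/2 := fun x => by
      rw [← dist_eq_norm]; exact (ContinuousMap.dist_apply_le_dist x).trans hd.le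
    have h1 : ‖∫ x, P x ∂(torusMeas m)‖ ≤ ε/2 := by
      refine le_of_tendsto (mean_span_s5 l hl P hP).norm ?_
      filter_upwards [eventually_gt_atTop 0] with T hT
      have := intervalIntegral.norm_integral_le_of_norm_le_const (a := (0:ℝ)) (b := T)
        (f := fun t => P (flow l t)) (C := ε/2) (fun t _ => by
          have := hPF (flow l t); rw [hF] at this; simpa using this)
      rw [norm_mul, norm_inv, Complex.norm_real, Real.norm_of_nonneg hT.le]
      rw [sub_zero, abs_of_pos hT] at this
      rw [inv_mul_le_iff₀ hT]; linarith
    have h2 : ‖∫ x, (F x - P x) ∂(torusMeas m)‖ ≤ ε/2 := by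
      have := norm_integral_le_of_norm_le_const (μ := torusMeas m) (Eventually.of_forall hPF)
      simpa using this
    rw [integral_sub (hint2 F) (hint2 P)] at h2
    have h3 := norm_add_le (∫ x, F x ∂(torusMeas m) - ∫ x, P x ∂(torusMeas m))
      (∫ x, P x ∂(torusMeas m))
    rw [sub_add_cancel] at h3
    linarith
  intro x
  by_contra hx
  have hpos : 0 < ∫ x, ‖g x‖ ∂(torusMeas m) :=
    Continuous.integral_pos_of_hasCompactSupport_nonneg_nonzero (x := x) (by fun_prop)
      (HasCompactSupport.of_compactSpace _) (fun _ => norm_nonneg _) (by simpa using hx)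
  have : ∫ x, F x ∂(torusMeas m) = ((∫ x, ‖g x‖ ∂(torusMeas m) : ℝ) : ℂ) := by
    exact integral_ofReal
  rw [this, Complex.norm_real, Real.norm_of_nonneg hpos.le] at key
  linarith

/-- An entire function of one variable vanishing on the unit circle is zero. -/
lemma entire_circle {h : ℂ → ℂ} (hd : Differentiable ℂ h) (h0 : ∀ z, ‖z‖ = 1 → h z = 0) (z : ℂ) :
    h z = 0 := by
  have hball : Set.EqOn h (fun _ => 0) (Metric.ball 0 1) :=
    Complex.eqOn_of_eqOn_frontier Metric.isBounded_ball hd.diffContOnCl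
      (differentiable_const _).diffContOnCl (fun z hz => h0 z (by
        rw [frontier_ball _ one_ne_zero] at hz
        simpa using hz))
  have ha : AnalyticOnNhd ℂ h Set.univ := hd.differentiableOn.analyticOnNhd isOpen_univ
  exact ha.eqOn_zero_of_preconnected_of_eventuallyEq_zero isPreconnected_univ (Set.mem_univ 0)
    (by filter_upwards [Metric.ball_mem_nhds (0:ℂ) one_pos] with z hz' using hball hz')
    (Set.mem_univ z)

lemma entire_torus {m : ℕ} {h : (Fin m → ℂ) → ℂ} (hd : Differentiable ℂ h)
    (h0 : ∀ w, (∀ j, ‖w j‖ = 1) → h w = 0) (w : Fin m → ℂ) : h w = 0 := by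
  have : ∀ s : Finset (Fin m), ∀ w, (∀ j, j ∉ s → ‖w j‖ = 1) → h w = 0 := by
    intro s
    induction s using Finset.induction_on with
    | empty => intro w hw; exact h0 w fun j => hw j (by simp)
    | insert a s ha ih =>
      intro w hw
      have hd' : Differentiable ℂ (fun z : ℂ => h (Function.update w a z)) := by
        refine hd.comp ?_
        intro z
        exact (hasFDerivAt_update w z).differentiableAt
      have := entire_circle hd' (fun z hz => ih _ fun j hj => by
        by_cases hja : j = a
        · subst hja; simpa using hz
        · rw [Function.update_of_ne hja]; exact hw j (by simp [hja, hj])) (w a)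
      simpa using this
  exact this Finset.univ w (by simp)

lemma exists_indep (m : ℕ) : ∃ l : Fin m → ℝ, LinearIndependent ℤ l := by
  have h : (m : Cardinal) ≤ Module.rank ℚ ℝ := by
    rw [Real.rank_rat_real]
    exact (Cardinal.natCast_lt_aleph0).le.trans Cardinal.aleph0_le_continuum
  obtain ⟨l, hl⟩ := Module.le_rank_iff.mp h
  exact ⟨l, hl.restrict_scalars' ℤ⟩

end

theorem exists_nondegenerate_disk_through_point (m : ℕ) (hm : 1 ≤ m) (p : Fin m → ℂ) :
    ∃ f : ℂ → (Fin m → ℂ), DifferentiableOn ℂ f (Metric.ball (0 : ℂ) 1) ∧ f 0 = p ∧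
      (∀ h : (Fin m → ℂ) → ℂ, Differentiable ℂ h →
        (∀ z ∈ Metric.ball (0 : ℂ) 1, h (f z) = 0) → ∀ w : Fin m → ℂ, h w = 0) ∧
      (∀ P : MvPolynomial (Fin m) ℂ,
        (∀ z ∈ Metric.ball (0 : ℂ) 1, MvPolynomial.eval (f z) P = 0) → P = 0) := by
  obtain ⟨l, hl⟩ := exists_indep m
  let f : ℂ → (Fin m → ℂ) := fun z j =>
    Complex.exp (2 * Real.pi * Complex.I * (l j : ℂ) * z) + (p j - 1)
  have hf : Differentiable ℂ f := by
    rw [differentiable_pi]; intro j; fun_prop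
  have main : ∀ h : (Fin m → ℂ) → ℂ, Differentiable ℂ h →
        (∀ z ∈ Metric.ball (0 : ℂ) 1, h (f z) = 0) → ∀ w : Fin m → ℂ, h w = 0 := by
    intro h hh hz w
    have hall : ∀ z, h (f z) = 0 := by
      have ha : AnalyticOnNhd ℂ (h ∘ f) Set.univ :=
        (hh.comp hf).differentiableOn.analyticOnNhd isOpen_univ
      have := ha.eqOn_zero_of_preconnected_of_eventuallyEq_zero isPreconnected_univ
        (Set.mem_univ 0)
        (by filter_upwards [Metric.ball_mem_nhds (0:ℂ) one_pos] with z hz' using hz z hz')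
      exact fun z => this (Set.mem_univ z)
    let k : (Fin m → ℂ) → ℂ := fun w => h (w + (fun j => p j - 1))
    have hk : Differentiable ℂ k := hh.comp (differentiable_id.add_const _)
    let g : C(UnitAddTorus (Fin m), ℂ) :=
      ⟨fun x => k (fun j => fourier 1 (x j)), hk.continuous.comp (by fun_prop)⟩
    have hg := torus_zero l hl g (fun t => by
      have := hall t
      convert this using 1
      change h _ = h _
      congr 1
      funext j
      simp only [f, flow, Pi.add_apply, fourier_coe_apply]
      congr 2
      push_cast; ring)
    have hkz : ∀ w, k w = 0 := by
      refine entire_torus hk fun w hw => ?_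
      choose x hx using fun j =>
        (AddCircle.homeomorphCircle (T := 1) one_ne_zero).surjective
          ⟨w j, mem_sphere_zero_iff_norm.2 (hw j)⟩
      have := hg x
      convert this using 1
      change k _ = k _
      congr 1
      funext j
      rw [fourier_one, ← AddCircle.homeomorphCircle_apply one_ne_zero, hx]
    have := hkz (w - fun j => p j - 1)
    simpa [k] using this
  refine ⟨f, hf.differentiableOn, ?_, main, ?_⟩
  · funext j; simp [f]
  · intro P hP
    refine MvPolynomial.funext fun w => ?_
    rw [map_zero]
    refine main (fun w => MvPolynomial.eval w P) ?_ hP w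
    intro w
    exact (AnalyticOnNhd.eval_mvPolynomial P w (Set.mem_univ w)).differentiableAt
end

section
/- Let P ∈ ℂ[z] be a nonconstant polynomial and let k ≥ 1. For a polynomial R in k+1 variables w, y₁, …, y_k with complex coefficients, the following are equivalent: (a) R(exp(P(z)), P'(z), P''(z), …, P^{(k)}(z)) = 0 for all z ∈ ℂ; (b) R(w, P'(z), P''(z), …, P^{(k)}(z)) = 0 for all w ∈ ℂ and all z ∈ ℂ. (Equivalently: for the finite-order entire curve f = exp∘P into ℂ* with k-jet lift z ↦ (f(z); P'(z), …, P^{(k)}(z)), the Zariski closure X_k of the jet lift image in ℂ* × ℂ^k is the product ℂ* × W_k, where W_k is the Zariski closure of {(P'(z), …, P^{(k)}(z)) : z ∈ ℂ} in ℂ^k.) -/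
theorem eval_aeval_poly_aux {n : ℕ} (f : Fin n → Polynomial ℂ) (R : MvPolynomial (Fin n) ℂ)
    (z : ℂ) : (MvPolynomial.aeval f R).eval z = MvPolynomial.eval (fun i => (f i).eval z) R := by
  induction R using MvPolynomial.induction_on with
  | C a => simp
  | add p q hp hq => simp [hp, hq]
  | mul_X p i hp => simp [hp]

/-- Let `P` be a nonconstant polynomial and `k ≥ 1`. For a polynomial `R` in
variables `w, y₁, …, y_k`, the identity `R(exp(P z), P'(z), …, P^{(k)}(z)) = 0` for all `z`
holds iff `R(w, P'(z), …, P^{(k)}(z)) = 0` for all `w ∈ ℂ` and all `z ∈ ℂ`. -/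
theorem jet_closure_product_exp_poly (P : Polynomial ℂ) (hP : 0 < P.natDegree)
    (k : ℕ) (hk : 1 ≤ k) (R : MvPolynomial (Fin (k + 1)) ℂ) :
    (∀ z : ℂ, MvPolynomial.eval
        (Fin.cons (Complex.exp (P.eval z))
          (fun j : Fin k => ((Polynomial.derivative)^[(j : ℕ) + 1] P).eval z)) R = 0)
    ↔ (∀ w z : ℂ, MvPolynomial.eval
        (Fin.cons w
          (fun j : Fin k => ((Polynomial.derivative)^[(j : ℕ) + 1] P).eval z)) R = 0) := by
  constructor
  swap
  · intro h z
    exact h _ z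
  intro h
  -- nonzero `w`: use periodicity of the exponential
  have key : ∀ w : ℂ, w ≠ 0 → ∀ z : ℂ, MvPolynomial.eval
        (Fin.cons w
          (fun j : Fin k => ((Polynomial.derivative)^[(j : ℕ) + 1] P).eval z)) R = 0 := by
    intro w hw
    let f : Fin (k + 1) → Polynomial ℂ := Fin.cons (Polynomial.C w)
      (fun j : Fin k => (Polynomial.derivative)^[(j : ℕ) + 1] P)
    have hf : ∀ z : ℂ, (fun i => (f i).eval z) = (Fin.cons w
          (fun j : Fin k => ((Polynomial.derivative)^[(j : ℕ) + 1] P).eval z) :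
            Fin (k + 1) → ℂ) := by
      intro z
      funext i
      refine Fin.cases ?_ (fun j => ?_) i <;> simp [f]
    have hsurj : ∀ n : ℕ, ∃ z : ℂ,
        P.eval z = Complex.log w + n * (2 * Real.pi * Complex.I) := by
      intro n
      obtain ⟨z, hz⟩ := IsAlgClosed.exists_root
        (P - Polynomial.C (Complex.log w + n * (2 * Real.pi * Complex.I))) (by
          rw [Polynomial.degree_sub_C (Polynomial.natDegree_pos_iff_degree_pos.mp hP)]
          exact (Polynomial.natDegree_pos_iff_degree_pos.mp hP).ne')
      refine ⟨z, ?_⟩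
      rw [Polynomial.IsRoot.def, Polynomial.eval_sub, Polynomial.eval_C] at hz
      exact sub_eq_zero.mp hz
    choose s hs using hsurj
    have hinj : Function.Injective s := by
      intro a b hab
      have h1 := hs a
      rw [hab, hs b] at h1
      have h2 := mul_right_cancel₀ Complex.two_pi_I_ne_zero (add_left_cancel h1)
      exact_mod_cast h2.symm
    have hzero : MvPolynomial.aeval f R = 0 := by
      apply Polynomial.eq_zero_of_infinite_isRoot
      refine (Set.infinite_range_of_injective hinj).mono ?_
      rintro _ ⟨n, rfl⟩
      have h3 := h (s n)
      rw [hs n, Complex.exp_add, Complex.exp_nat_mul_two_pi_mul_I, mul_one,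
        Complex.exp_log hw] at h3
      change (MvPolynomial.aeval f R).eval (s n) = 0
      rw [eval_aeval_poly_aux, hf, h3]
    intro z
    rw [← hf, ← eval_aeval_poly_aux, hzero, Polynomial.eval_zero]
  intro w z
  let g : Fin (k + 1) → Polynomial ℂ := Fin.cons Polynomial.X
      (fun j : Fin k => Polynomial.C (((Polynomial.derivative)^[(j : ℕ) + 1] P).eval z))
  have hg : ∀ w : ℂ, (fun i => (g i).eval w) = (Fin.cons w
          (fun j : Fin k => ((Polynomial.derivative)^[(j : ℕ) + 1] P).eval z) :
            Fin (k + 1) → ℂ) := by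
    intro w
    funext i
    refine Fin.cases ?_ (fun j => ?_) i <;> simp [g]
  have hzero : MvPolynomial.aeval g R = 0 := by
    apply Polynomial.eq_zero_of_infinite_isRoot
    refine (Set.Finite.infinite_compl (Set.finite_singleton (0 : ℂ))).mono ?_
    intro v hv
    change (MvPolynomial.aeval g R).eval v = 0
    rw [eval_aeval_poly_aux, hg]
    exact key v hv z
  rw [← hg, ← eval_aeval_poly_aux, hzero, Polynomial.eval_zero]
end

section
/- Let n, m ≥ 1, let P₁, …, P_n ∈ ℂ[z] be polynomials such that for every nonzero integer tuple (k₁, …, k_n) ∈ ℤ^n the polynomial k₁P₁ + ⋯ + k_nP_n is nonconstant, and let Q₁, …, Q_m ∈ ℂ[z] be arbitrary polynomials. Then for every polynomial R in n+m variables w₁, …, w_n, y₁, …, y_m with complex coefficients, the following are equivalent: (a) R(exp(P₁(z)), …, exp(P_n(z)), Q₁(z), …, Q_m(z)) = 0 for all z ∈ ℂ; (b) R(w₁, …, w_n, Q₁(z), …, Q_m(z)) = 0 for all w ∈ ℂ^n and all z ∈ ℂ. (Equivalently: the Zariski closure of the curve z ↦ (exp(P₁(z)), …, exp(P_n(z)),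 Q₁(z), …, Q_m(z)) in (ℂ*)^n × ℂ^m is the product (ℂ*)^n × W, where W is the Zariski closure of {(Q₁(z), …, Q_m(z)) : z ∈ ℂ} in ℂ^m.) -/
open Polynomial in
lemma jet_L_inj (G A : Polynomial ℂ) (hG : 0 < G.natDegree)
    (h : derivative A + derivative G * A = 0) : A = 0 := by
  by_contra hA
  have hG' : derivative G ≠ 0 := by
    intro h0
    have := Polynomial.natDegree_eq_zero_of_derivative_eq_zero h0
    omega
  have h1 : (derivative A).degree < A.degree := Polynomial.degree_derivative_lt hA
  have h2 : derivative A = - (derivative G * A) := eq_neg_of_add_eq_zero_left h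
  rw [h2, Polynomial.degree_neg, mul_comm] at h1
  exact absurd h1 (not_lt.mpr (Polynomial.degree_le_mul_left A hG'))

open Polynomial in
lemma jet_L_iter_inj (G : Polynomial ℂ) (hG : 0 < G.natDegree) (k : ℕ) : ∀ A : Polynomial ℂ,
    (fun A => derivative A + derivative G * A)^[k] A = 0 → A = 0 := by
  induction k with
  | zero => intro A h; simpa using h
  | succ k ih =>
    intro A h
    rw [Function.iterate_succ_apply] at h
    exact jet_L_inj G A hG (ih _ h)

open Polynomial in
lemma jet_L_iter_sum {ι : Type*} (s : Finset ι) (G : ι → Polynomial ℂ) (k : ℕ) :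
    ∀ (A : ι → Polynomial ℂ) (B : Polynomial ℂ),
    (∀ z : ℂ, ∑ i ∈ s, (A i).eval z * Complex.exp ((G i).eval z) = B.eval z) →
    ∀ z : ℂ, ∑ i ∈ s, ((fun A => derivative A + derivative (G i) * A)^[k] (A i)).eval z
      * Complex.exp ((G i).eval z) = (derivative^[k] B).eval z := by
  induction k with
  | zero => intro A B h z; simpa using h z
  | succ k ih =>
    intro A B h z
    simp only [Function.iterate_succ_apply]
    refine ih (fun i => derivative (A i) + derivative (G i) * A i) (derivative B) ?_ z
    intro z
    have h1 : HasDerivAt (fun z : ℂ => ∑ i ∈ s, (A i).eval z * Complex.exp ((G i).eval z))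
        (∑ i ∈ s, ((derivative (A i)).eval z * Complex.exp ((G i).eval z)
          + (A i).eval z * (Complex.exp ((G i).eval z) * (derivative (G i)).eval z))) z := by
      apply HasDerivAt.fun_sum
      intro i _
      exact ((A i).hasDerivAt z).mul ((G i).hasDerivAt z).cexp
    rw [funext h] at h1
    rw [← h1.unique (B.hasDerivAt z)]
    refine Finset.sum_congr rfl fun i _ => ?_
    simp only [eval_add, eval_mul]
    ring

open Polynomial in
lemma jet_exp_indep {ι : Type*} (s : Finset ι) (F : ι → Polynomial ℂ) :
    ∀ A : ι → Polynomial ℂ,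
    (∀ i ∈ s, ∀ j ∈ s, i ≠ j → 0 < (F i - F j).natDegree) →
    (∀ z : ℂ, ∑ i ∈ s, (A i).eval z * Complex.exp ((F i).eval z) = 0) →
    ∀ i ∈ s, A i = 0 := by
  classical
  induction s using Finset.induction_on with
  | empty => simp
  | insert t s hts ih =>
    intro A hF h
    have hne : ∀ i ∈ s, i ≠ t := fun i hi e => hts (e ▸ hi)
    have hG : ∀ i ∈ s, 0 < (F i - F t).natDegree := fun i hi =>
      hF i (Finset.mem_insert_of_mem hi) t (Finset.mem_insert_self _ _) (hne i hi)
    have h1 : ∀ z : ℂ, ∑ i ∈ s, (A i).eval z * Complex.exp ((F i - F t).eval z)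
        = (-A t).eval z := by
      intro z
      have hz := h z
      rw [Finset.sum_insert hts] at hz
      have : ∑ i ∈ s, (A i).eval z * Complex.exp ((F i - F t).eval z)
          = (∑ i ∈ s, (A i).eval z * Complex.exp ((F i).eval z)) / Complex.exp ((F t).eval z) := by
        rw [Finset.sum_div]
        refine Finset.sum_congr rfl fun i _ => ?_
        rw [eval_sub, Complex.exp_sub, mul_div_assoc]
      rw [this, div_eq_iff (Complex.exp_ne_zero _), eval_neg]
      linear_combination hz
    have h2 := jet_L_iter_sum s (fun i => F i - F t) ((-A t).natDegree + 1) A (-A t) h1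
    rw [Polynomial.iterate_derivative_eq_zero (Nat.lt_succ_self _)] at h2
    have h3 : ∀ i ∈ s, A i = 0 := by
      intro i hi
      refine jet_L_iter_inj (F i - F t) (hG i hi) ((-A t).natDegree + 1) _ ?_
      refine ih (fun i => (fun B => derivative B + derivative (F i - F t) * B)^[(-A t).natDegree + 1]
        (A i)) (fun i hi j hj => hF i (Finset.mem_insert_of_mem hi) j (Finset.mem_insert_of_mem hj))
        ?_ i hi
      intro z
      have hz := h2 z
      have : ∀ i ∈ s, ∀ c : ℂ, c * Complex.exp ((F i).eval z)
          = c * Complex.exp ((F i - F t).eval z) * Complex.exp ((F t).eval z) := by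
        intro i _ c
        rw [mul_assoc, ← Complex.exp_add, eval_sub, sub_add_cancel]
      rw [Finset.sum_congr rfl fun i hi => this i hi _, ← Finset.sum_mul, hz]
      simp
    intro i hi
    rcases Finset.mem_insert.mp hi with rfl | hi
    · apply Polynomial.funext
      intro z
      have hz := h1 z
      rw [Finset.sum_eq_zero fun j hj => by rw [h3 j hj]; simp] at hz
      rw [eval_neg] at hz
      simpa using hz.symm
    · exact h3 i hi

/-- Let `P₁, …, P_n` be polynomials such that every nontrivial `ℤ`-linear
combination `k₁P₁ + ⋯ + k_nP_n` (with `(k₁,…,k_n) ≠ 0`) is nonconstant, and let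
`Q₁, …, Q_m` be arbitrary polynomials. Then for a polynomial `R` in `n + m` variables,
`R(exp(P₁ z), …, exp(P_n z), Q₁(z), …, Q_m(z)) = 0` for all `z` iff
`R(w₁, …, w_n, Q₁(z), …, Q_m(z)) = 0` for all `w ∈ ℂ^n` and all `z`. -/
theorem jet_closure_product_torus (n m : ℕ) (hn : 1 ≤ n) (hm : 1 ≤ m)
    (P : Fin n → Polynomial ℂ)
    (hP : ∀ k : Fin n → ℤ, k ≠ 0 → 0 < (∑ i : Fin n, k i • P i).natDegree)
    (Q : Fin m → Polynomial ℂ) (R : MvPolynomial (Fin (n + m)) ℂ) :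
    (∀ z : ℂ, MvPolynomial.eval
        (Fin.append (fun i : Fin n => Complex.exp ((P i).eval z))
          (fun j : Fin m => (Q j).eval z)) R = 0)
    ↔ (∀ (w : Fin n → ℂ) (z : ℂ), MvPolynomial.eval
        (Fin.append w (fun j : Fin m => (Q j).eval z)) R = 0) := by
  refine ⟨fun h => ?_, fun h z => h _ z⟩
  let φ : MvPolynomial (Fin (n + m)) ℂ →+* MvPolynomial (Fin n) (Polynomial ℂ) :=
    MvPolynomial.eval₂Hom (MvPolynomial.C.comp Polynomial.C)
      (Fin.append MvPolynomial.X (fun j => MvPolynomial.C (Q j)))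
  have key : ∀ (w : Fin n → ℂ) (z : ℂ), MvPolynomial.eval
      (Fin.append w (fun j : Fin m => (Q j).eval z)) R
      = MvPolynomial.eval₂ (Polynomial.evalRingHom z) w (φ R) := by
    intro w z
    have : MvPolynomial.eval (Fin.append w (fun j : Fin m => (Q j).eval z))
        = (MvPolynomial.eval₂Hom (Polynomial.evalRingHom z) w).comp φ := by
      apply MvPolynomial.ringHom_ext
      · intro r
        simp [φ]
      · intro i
        refine Fin.addCases (fun i => ?_) (fun i => ?_) i <;> simp [φ]
    rw [this]
    rfl
  have h0 : φ R = 0 := by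
    have hc := jet_exp_indep (φ R).support (fun d => ∑ i : Fin n, (d i : ℤ) • P i)
      (fun d => (φ R).coeff d) ?_ ?_
    · ext1 d
      by_cases hd : d ∈ (φ R).support
      · simpa using hc d hd
      · simpa using hd
    · intro d _ e _ hde
      have := hP (fun i => (d i : ℤ) - e i) ?_
      · simpa [sub_smul, Finset.sum_sub_distrib] using this
      · intro h0
        apply hde
        ext i
        have := congrFun h0 i
        simp only [Pi.zero_apply] at this
        omega
    · intro z
      have hz := h z
      rw [key, MvPolynomial.eval₂_eq'] at hz
      rw [← hz]
      refine Finset.sum_congr rfl fun d _ => ?_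
      simp [Polynomial.eval_finset_sum, Complex.exp_sum, Complex.exp_nat_mul]
  intro w z
  rw [key, h0]
  simp
end

section
/- Let n ≥ 1, let X ⊆ ℂ^n be a Zariski closed set, and let I(X) denote the set of all polynomials in n variables vanishing on X. Let S ⊆ X be a subset that is Zariski dense in X, i.e., every polynomial vanishing on S vanishes on X. Let v ∈ ℂ^n and suppose that for every h ∈ I(X) the directional derivative D_v h := v₁·∂h/∂x₁ + ⋯ + v_n·∂h/∂x_n vanishes identically on S. Then X is invariant under translation by the one-parameter group generated by v: for every x ∈ X and every t ∈ ℂ, the point x + t·v lies in X. -/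
/-- Restriction of a polynomial to the line `x + t v`. -/
noncomputable def lineMap {n : ℕ} (x v : Fin n → ℂ) :
    MvPolynomial (Fin n) ℂ →ₐ[ℂ] Polynomial ℂ :=
  MvPolynomial.aeval (fun i => Polynomial.C (x i) + Polynomial.X * Polynomial.C (v i))

theorem lineMap_eval {n : ℕ} (x v : Fin n → ℂ) (t : ℂ) (h : MvPolynomial (Fin n) ℂ) :
    (lineMap x v h).eval t = MvPolynomial.eval (x + t • v) h := by
  induction h using MvPolynomial.induction_on with
  | C a => simp [lineMap]
  | add p q hp hq => simp [hp, hq]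
  | mul_X p i hp => rw [map_mul, Polynomial.eval_mul, hp]; simp [lineMap]; exact Or.inl (mul_comm _ _)

theorem lineMap_derivative {n : ℕ} (x v : Fin n → ℂ) (h : MvPolynomial (Fin n) ℂ) :
    Polynomial.derivative (lineMap x v h) = lineMap x v
      (∑ i : Fin n, MvPolynomial.C (v i) * MvPolynomial.pderiv i h) := by
  induction h using MvPolynomial.induction_on with
  | C a => simp [lineMap]
  | add p q hp hq => simp only [map_add, hp, hq, mul_add, Finset.sum_add_distrib]
  | mul_X p j hp =>
    have key : (∑ i : Fin n, MvPolynomial.C (v i) *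
        MvPolynomial.pderiv i (p * MvPolynomial.X j)) =
        (∑ i : Fin n, MvPolynomial.C (v i) * MvPolynomial.pderiv i p) * MvPolynomial.X j
          + p * MvPolynomial.C (v j) := by
      have h1 : ∀ i : Fin n, MvPolynomial.C (v i) *
          MvPolynomial.pderiv i (p * MvPolynomial.X j) =
          MvPolynomial.C (v i) * MvPolynomial.pderiv i p * MvPolynomial.X j +
          (if j = i then p * MvPolynomial.C (v i) else 0) := by
        intro i
        rw [MvPolynomial.pderiv_mul]
        by_cases hij : j = i
        · subst hij
          rw [MvPolynomial.pderiv_X_self, if_pos rfl]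
          ring
        · rw [MvPolynomial.pderiv_X_of_ne hij, if_neg hij]
          ring
      rw [Finset.sum_congr rfl (fun i _ => h1 i), Finset.sum_add_distrib, Finset.sum_mul]
      simp
    rw [key, map_mul, Polynomial.derivative_mul, hp, map_add, map_mul, map_mul]
    simp [lineMap]

/-- Let `X ⊆ ℂ^n` be Zariski closed, `S ⊆ X` Zariski dense in `X`, and
`v ∈ ℂ^n`. If for every polynomial `h` vanishing on `X` the directional derivative
`D_v h = ∑ i, v i · ∂h/∂x_i` vanishes identically on `S`, then `X` is invariant under the
one-parameter group generated by `v`: `x + t • v ∈ X` for all `x ∈ X`, `t ∈ ℂ`. -/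
theorem zariski_closed_invariant_under_flow (n : ℕ) (hn : 1 ≤ n)
    (X : Set (Fin n → ℂ))
    (hX : ∃ T : Set (MvPolynomial (Fin n) ℂ),
      X = {x : Fin n → ℂ | ∀ P ∈ T, MvPolynomial.eval x P = 0})
    (S : Set (Fin n → ℂ)) (hSX : S ⊆ X)
    (hdense : ∀ P : MvPolynomial (Fin n) ℂ,
      (∀ s ∈ S, MvPolynomial.eval s P = 0) → ∀ x ∈ X, MvPolynomial.eval x P = 0)
    (v : Fin n → ℂ)
    (hder : ∀ h : MvPolynomial (Fin n) ℂ, (∀ x ∈ X, MvPolynomial.eval x h = 0) →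
      ∀ s ∈ S, MvPolynomial.eval s
        (∑ i : Fin n, MvPolynomial.C (v i) * MvPolynomial.pderiv i h) = 0) :
    ∀ x ∈ X, ∀ t : ℂ, (x + t • v) ∈ X := by
  have hD : ∀ h : MvPolynomial (Fin n) ℂ, (∀ x ∈ X, MvPolynomial.eval x h = 0) →
      ∀ x ∈ X, MvPolynomial.eval x
        (∑ i : Fin n, MvPolynomial.C (v i) * MvPolynomial.pderiv i h) = 0 :=
    fun h hh => hdense _ (hder h hh)
  intro x hx t
  have hc : ∀ k : ℕ, ∀ h : MvPolynomial (Fin n) ℂ, (∀ x ∈ X, MvPolynomial.eval x h = 0) →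
      (lineMap x v h).coeff k = 0 := by
    intro k
    induction k with
    | zero =>
      intro h hh
      rw [Polynomial.coeff_zero_eq_eval_zero, lineMap_eval]
      simpa using hh x hx
    | succ k ih =>
      intro h hh
      have h1 := ih _ (hD h hh)
      rw [← lineMap_derivative, Polynomial.coeff_derivative] at h1
      rcases mul_eq_zero.mp h1 with h2 | h2
      · exact h2
      · exact absurd h2 (Nat.cast_add_one_ne_zero k)
  obtain ⟨T, rfl⟩ := hX
  intro P hP
  have h0 : lineMap x v P = 0 := by
    ext k
    simpa using hc k P (fun y hy => hy P hP)
  rw [← lineMap_eval, h0, Polynomial.eval_zero]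
end
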